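/- arXiv:2403.13700 — 2 statements merged into one kernel-verified Lean document; each statement's English description precedes it below -/
import Mathlib

section
/- Let M : ℕ and let f : (Fin (M+1) → ℝ) → ℝ be the composition of the STL conjunction and_S with the map sending a vector to the list of its coordinates. Then f satisfies the shadow-lifting property: for every real p > 0 and every index i : Fin (M+1), the i-th partial derivative of f at the constant vector with value p exists and is positive. -/
/-!
Near a constant vector with value `p > 0`, the conjunction is the weighted mean of the coordinates,
with weights `exp (-(ν * x̃))`. The minimum, hence each weight, is continuous but in general not
differentiable there. This is enough: writing the mean as `p + ∑ j, λ j • (x j - p)` with normalized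
weights `λ j`, each weight multiplies a quantity vanishing at the constant vector, so its variation
is negligible to first order. All weights equal `1` at the constant vector, so the derivative is the
unweighted mean of the coordinates, and each partial derivative is the inverse of the dimension.
-/

open Filter Topology Real

/-- Minimum of a list of reals (`0` for the empty list). -/
noncomputable def listMin (a : List ℝ) : ℝ := a.min?.getD 0

/-- Maximum of a list of reals (`0` for the empty list). -/
noncomputable def listMax (a : List ℝ) : ℝ := a.max?.getD 0

/-- STL conjunction, case `a_min < 0`. -/
noncomputable def stl_and_lt0 (ν : ℝ) (a : List ℝ) : ℝ :=
  (a.map fun x => listMin a * exp ((x - listMin a) / listMin a)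
      * exp (ν * ((x - listMin a) / listMin a))).sum /
  (a.map fun x => exp (ν * ((x - listMin a) / listMin a))).sum

/-- STL conjunction, case `a_min > 0`. -/
noncomputable def stl_and_gt0 (ν : ℝ) (a : List ℝ) : ℝ :=
  (a.map fun x => x * exp (-(ν * ((x - listMin a) / listMin a)))).sum /
  (a.map fun x => exp (-(ν * ((x - listMin a) / listMin a)))).sum

/-- The STL conjunction `and_S`. -/
noncomputable def and_S (ν : ℝ) (a : List ℝ) : ℝ :=
  if listMin a < 0 then stl_and_lt0 ν a
  else if 0 < listMin a then stl_and_gt0 ν a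
  else 0

/-- The STL disjunction `or_S`. -/
noncomputable def or_S (ν : ℝ) (a : List ℝ) : ℝ :=
  if 0 < listMax a then
    (a.map fun x => listMax a * exp ((x - listMax a) / listMax a)
        * exp (ν * ((x - listMax a) / listMax a))).sum /
    (a.map fun x => exp (ν * ((x - listMax a) / listMax a))).sum
  else if listMax a < 0 then
    (a.map fun x => x * exp (-(ν * ((x - listMax a) / listMax a)))).sum /
    (a.map fun x => exp (-(ν * ((x - listMax a) / listMax a)))).sum
  else 0

/-- The `i`-th partial derivative of `f` at `a` exists and equals `L`. -/
def HasPartialDeriv {n : ℕ} (f : (Fin n → ℝ) → ℝ) (a : Fin n → ℝ) (i : Fin n) (L : ℝ) : Prop :=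
  Filter.Tendsto (fun h : ℝ => h⁻¹ * (f (a + h • (Pi.single i 1 : Fin n → ℝ)) - f a))
    (𝓝[≠] (0 : ℝ)) (𝓝 L)

/-- `f` satisfies shadow-lifting: at every positive constant vector, all partial
derivatives exist and are positive. -/
def ShadowLifting {n : ℕ} (f : (Fin n → ℝ) → ℝ) : Prop :=
  ∀ p : ℝ, 0 < p → ∀ i : Fin n, ∃ L : ℝ, 0 < L ∧ HasPartialDeriv f (fun _ => p) i L

theorem centerMass_sub_const {R V ι : Type*} [Field R] [AddCommGroup V] [Module R V]
    {t : Finset ι} {w : ι → R} (hw : ∑ j ∈ t, w j ≠ 0) (z : ι → V) (p : V) :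
    t.centerMass w z - p = t.centerMass w fun j => z j - p := by
  nth_rw 1 [← t.centerMass_const hw p]
  simp only [Finset.centerMass, smul_sub, Finset.sum_sub_distrib, Function.const_apply]

section CenterMassDerivative

variable {𝕜 E F : Type*} [NontriviallyNormedField 𝕜] [NormedAddCommGroup E] [NormedSpace 𝕜 E]
  [NormedAddCommGroup F] [NormedSpace 𝕜 F]

theorem hasFDerivAt_smul_of_continuousAt_of_eq_zero {c : E → 𝕜} {f : E → F} {f' : E →L[𝕜] F}
    {x : E} (hc : ContinuousAt c x) (hf : HasFDerivAt f f' x) (hfx : f x = 0) :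
    HasFDerivAt (fun y => c y • f y) (c x • f') x := by
  have hc' : (fun y => c y - c x) =o[𝓝 x] (fun _ => (1 : 𝕜)) :=
    (Asymptotics.isLittleO_one_iff 𝕜).2 (tendsto_sub_nhds_zero_iff.2 hc)
  have hf' : f =O[𝓝 x] (· - x) := by simpa only [hfx, sub_zero] using hf.isBigO_sub
  have hvariation : HasFDerivAt (fun y => (c y - c x) • f y) (0 : E →L[𝕜] F) x := by
    refine .of_isLittleO ?_
    simpa only [hfx, smul_zero, sub_zero, zero_apply, one_smul] using hc'.smul_isBigO hf'
  simpa only [sub_smul, sub_add_cancel, zero_add] using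
    hvariation.fun_add (hf.fun_const_smul (c x))

theorem hasFDerivAt_centerMass_of_forall_eq {ι : Type*} {t : Finset ι} {w : ι → E → 𝕜}
    {z : ι → E → F} {z' : ι → E →L[𝕜] F} {x : E} {p : F} (hw : ∀ j ∈ t, ContinuousAt (w j) x)
    (hsum : ∑ j ∈ t, w j x ≠ 0) (hz : ∀ j ∈ t, HasFDerivAt (z j) (z' j) x)
    (hzx : ∀ j ∈ t, z j x = p) :
    HasFDerivAt (fun y => t.centerMass (w · y) (z · y)) (t.centerMass (w · x) z') x := by
  have hsum_cont : ContinuousAt (fun y => ∑ j ∈ t, w j y) x := tendsto_finsetSum t hw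
  have hcentered : HasFDerivAt (fun y => t.centerMass (w · y) fun j => z j y - p)
      (t.centerMass (w · x) z') x := by
    have hnumerator : HasFDerivAt (fun y => ∑ j ∈ t, w j y • (z j y - p))
        (∑ j ∈ t, w j x • z' j) x :=
      HasFDerivAt.fun_sum fun j hj => hasFDerivAt_smul_of_continuousAt_of_eq_zero (hw j hj)
        ((hz j hj).sub_const p) (sub_eq_zero.2 (hzx j hj))
    refine hasFDerivAt_smul_of_continuousAt_of_eq_zero (hsum_cont.inv₀ hsum) hnumerator ?_
    exact Finset.sum_eq_zero fun j hj => by simp only [hzx j hj, sub_self, smul_zero]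
  have hshift : (fun y => t.centerMass (w · y) (z · y)) =ᶠ[𝓝 x]
      fun y => t.centerMass (w · y) (fun j => z j y - p) + p := by
    filter_upwards [hsum_cont.eventually_ne hsum] with y hy
    rw [← centerMass_sub_const hy, sub_add_cancel]
  exact (hcentered.add_const p).congr_of_eventuallyEq hshift

end CenterMassDerivative

theorem HasPartialDeriv.of_hasFDerivAt {n : ℕ} {f : (Fin n → ℝ) → ℝ} {a : Fin n → ℝ}
    {f' : (Fin n → ℝ) →L[ℝ] ℝ} (hf : HasFDerivAt f f' a) (i : Fin n) :
    HasPartialDeriv f a i (f' (Pi.single i 1)) :=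
  (hf.hasLineDerivAt (Pi.single i 1)).tendsto_slope_zero

theorem listMin_ofFn {n : ℕ} [NeZero n] (a : Fin n → ℝ) :
    listMin (List.ofFn a) = Finset.univ.inf' Finset.univ_nonempty a := by
  have hmin : (List.ofFn a).min? = some (Finset.univ.inf' Finset.univ_nonempty a) := by
    rw [List.min?_eq_some_iff]
    refine ⟨?_, List.forall_mem_ofFn_iff.2 fun j => Finset.inf'_le a (Finset.mem_univ j)⟩
    obtain ⟨j, -, hj⟩ := Finset.exists_mem_eq_inf' Finset.univ_nonempty a
    exact List.mem_ofFn.2 ⟨j, hj.symm⟩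
  rw [listMin, hmin, Option.getD_some]

theorem listMin_ofFn_const {n : ℕ} [NeZero n] (p : ℝ) :
    listMin (List.ofFn fun _ : Fin n => p) = p := by
  rw [listMin_ofFn, Finset.inf'_const]

theorem continuous_listMin_ofFn {n : ℕ} [NeZero n] :
    Continuous fun a : Fin n → ℝ => listMin (List.ofFn a) := by
  simp only [listMin_ofFn]
  exact Continuous.finset_inf'_apply _ fun j _ => continuous_apply j

/-- The weight `exp (-(ν * x̃))` of the `j`-th coordinate in the STL conjunction of a vector with
positive minimum. -/
noncomputable def stlWeight (ν : ℝ) {n : ℕ} (j : Fin n) (a : Fin n → ℝ) : ℝ :=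
  exp (-(ν * ((a j - listMin (List.ofFn a)) / listMin (List.ofFn a))))

theorem stlWeight_const (ν : ℝ) {n : ℕ} (j : Fin n) (p : ℝ) :
    stlWeight ν j (fun _ => p) = 1 := by
  have : NeZero n := j.neZero
  rw [stlWeight, listMin_ofFn_const, sub_self, zero_div, mul_zero, neg_zero, exp_zero]

theorem continuousAt_stlWeight (ν : ℝ) {n : ℕ} (j : Fin n) {a : Fin n → ℝ}
    (ha : listMin (List.ofFn a) ≠ 0) : ContinuousAt (stlWeight ν j) a := by
  have : NeZero n := j.neZero
  have hmin := (continuous_listMin_ofFn (n := n)).continuousAt (x := a)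
  have hnormalized := ((continuousAt_apply j a).sub hmin).div hmin ha
  exact (hnormalized.const_mul ν).neg.rexp

theorem and_S_ofFn_eq_centerMass (ν : ℝ) {n : ℕ} {a : Fin n → ℝ}
    (ha : 0 < listMin (List.ofFn a)) :
    and_S ν (List.ofFn a) = Finset.univ.centerMass (fun j => stlWeight ν j a) a := by
  rw [and_S, if_neg ha.not_gt, if_pos ha, stl_and_gt0, List.map_ofFn, List.map_ofFn,
    List.sum_ofFn, List.sum_ofFn, Finset.centerMass, smul_eq_mul, div_eq_inv_mul]
  simp only [Function.comp_apply, stlWeight, smul_eq_mul, mul_comm]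

theorem hasFDerivAt_and_S_ofFn_const (ν : ℝ) {n : ℕ} [NeZero n] {p : ℝ} (hp : 0 < p) :
    HasFDerivAt (fun a : Fin n → ℝ => and_S ν (List.ofFn a))
      ((n : ℝ)⁻¹ • ∑ j, ContinuousLinearMap.proj (R := ℝ) (φ := fun _ : Fin n => ℝ) j)
      (fun _ => p) := by
  have hmin : 0 < listMin (List.ofFn fun _ : Fin n => p) := by rwa [listMin_ofFn_const]
  have hmean := hasFDerivAt_centerMass_of_forall_eq (t := Finset.univ)
    (fun j _ => continuousAt_stlWeight ν j hmin.ne')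
    (by simp [stlWeight_const, NeZero.ne n])
    (fun j _ => hasFDerivAt_apply (𝕜 := ℝ) j fun _ : Fin n => p) (fun _ _ => rfl)
  have hlocal : (fun a : Fin n → ℝ => and_S ν (List.ofFn a)) =ᶠ[𝓝 fun _ => p]
      fun a => Finset.univ.centerMass (fun j => stlWeight ν j a) a :=
    (continuous_listMin_ofFn.continuousAt.eventually_const_lt hmin).mono
      fun a ha => and_S_ofFn_eq_centerMass ν ha
  simpa [Finset.centerMass, stlWeight_const] using hmean.congr_of_eventuallyEq hlocal

theorem hasPartialDeriv_and_S_ofFn_const (ν : ℝ) {n : ℕ} (i : Fin n) {p : ℝ} (hp : 0 < p) :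
    HasPartialDeriv (and_S ν ∘ fun v : Fin n → ℝ => List.ofFn v) (fun _ => p) i (n : ℝ)⁻¹ := by
  have : NeZero n := i.neZero
  simpa [Pi.single_apply, Function.comp_def] using
    HasPartialDeriv.of_hasFDerivAt (hasFDerivAt_and_S_ofFn_const ν hp) i

theorem shadow_lifting_stl_and_general (ν : ℝ) (n : ℕ) :
    ShadowLifting (and_S ν ∘ fun v : Fin n → ℝ => List.ofFn v) := fun _ hp i =>
  ⟨(n : ℝ)⁻¹, inv_pos.2 (Nat.cast_pos.2 i.pos), hasPartialDeriv_and_S_ofFn_const ν i hp⟩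

theorem shadow_lifting_stl_and (ν : ℝ) (hν : 0 < ν) (M : ℕ) :
    ShadowLifting (and_S ν ∘ fun v : Fin (M + 1) → ℝ => List.ofFn v) :=
  shadow_lifting_stl_and_general ν (M + 1)
end

section
/- Inversion of STL conjunction (false case): for every nonempty list a of real numbers, if and_S a < 0 then there exists an element x of a with x < 0. -/
open Filter Topology Real

theorem listMin_eq_min {a : List ℝ} (ha : a ≠ []) : listMin a = a.min ha := by
  rw [listMin, List.min?_eq_some_min ha, Option.getD_some]

theorem listMin_mem {a : List ℝ} (ha : a ≠ []) : listMin a ∈ a :=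
  listMin_eq_min ha ▸ List.min_mem ha

theorem listMin_le_of_mem {a : List ℝ} {x : ℝ} (hx : x ∈ a) : listMin a ≤ x :=
  listMin_eq_min (List.ne_nil_of_mem hx) ▸ List.min_le_of_mem hx

theorem weighted_mean_nonneg {ι K : Type*} [Semifield K] [LinearOrder K] [IsStrictOrderedRing K]
    {l : List ι} {f w : ι → K} (hf : ∀ i ∈ l, 0 ≤ f i) (hw : ∀ i ∈ l, 0 ≤ w i) :
    0 ≤ (l.map fun i => f i * w i).sum / (l.map w).sum :=
  div_nonneg
    (List.sum_nonneg <| List.forall_mem_map.2 fun i hi => mul_nonneg (hf i hi) (hw i hi))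
    (List.sum_nonneg <| List.forall_mem_map.2 hw)

theorem stl_and_gt0_nonneg (ν : ℝ) {a : List ℝ} (ha : ∀ x ∈ a, 0 ≤ x) : 0 ≤ stl_and_gt0 ν a :=
  weighted_mean_nonneg ha fun _ _ => (exp_pos _).le

theorem and_S_nonneg_of_listMin_nonneg (ν : ℝ) {a : List ℝ} (hmin : 0 ≤ listMin a) :
    0 ≤ and_S ν a := by
  rw [and_S, if_neg hmin.not_gt]
  split_ifs
  · exact stl_and_gt0_nonneg ν fun x hx => hmin.trans (listMin_le_of_mem hx)
  · exact le_rfl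

theorem listMin_neg_of_and_S_neg {ν : ℝ} {a : List ℝ} (h : and_S ν a < 0) : listMin a < 0 :=
  lt_of_not_ge fun hmin => (and_S_nonneg_of_listMin_nonneg ν hmin).not_gt h

theorem stl_nary_inversion_andE0_general {ν : ℝ} {a : List ℝ} (ha : a ≠ [])
    (h : and_S ν a < 0) : ∃ x ∈ a, x < 0 :=
  ⟨listMin a, listMin_mem ha, listMin_neg_of_and_S_neg h⟩

theorem stl_nary_inversion_andE0 (ν : ℝ) (hν : 0 < ν) (a : List ℝ) (ha : a ≠ [])
    (h : and_S ν a < 0) : ∃ x ∈ a, x < 0 :=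
  stl_nary_inversion_andE0_general ha h
end
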